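/- Let h₀, g, μ be positive real numbers and let λ ∈ ℂ with Re λ > 0. Then the family (fun k : ℕ ↦ λ/(λ² + 2μλ + (2k+1)²π²h₀g)) is (absolutely) summable and −√(4h₀λ/(g(λ+2μ)))·tanh(√(λ(λ+2μ))/(2√(h₀g))) = −8h₀ · ∑_{k=0}^{∞} λ/(λ² + 2μλ + (2k+1)²π²h₀g), where all square roots are principal complex square roots. -/

import Mathlib

open Real

/-!
The terms of the Mittag-Leffler series of the cotangent, paired as `k` with `-(k + 1)`, give
`π cot (π y) = ∑ₖ (1 / (y + k) + 1 / (y - (k + 1)))`. Reflecting `y = 1 / 2 - x / π` turns this into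
the expansion of `tan x` over the odd multiples of `π / 2`, and `x = z I` into that of `tanh z`.
The branches in the transfer function are governed by `√(a / b) √(a b) = a`, valid in the right
half-plane. It is applied to `a = r λ`, `b = (λ + 2 μ) / r` with `r = 2 h₀ / √(h₀ g)`, so that
`a / b` and `a b` are exactly the two radicands.
-/

section PartialFractions

open Filter Topology

lemma hasSum_one_div_add_sub_one_div_add_succ {y : ℂ} (hy : ∀ k : ℕ, y + k ≠ 0) :
    HasSum (fun k : ℕ ↦ 1 / (y + k) - 1 / (y + (k + 1))) (1 / y) := by
  have hterm (k : ℕ) : 1 / (y + k) - 1 / (y + (k + 1)) = ((y + k + 1) * (y + k))⁻¹ := by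
    have hk := hy k
    have hk' : y + k + 1 ≠ 0 := by simpa [add_assoc] using hy (k + 1)
    rw [← add_assoc]
    field_simp
    ring
  have hsummable : Summable fun k : ℕ ↦ 1 / (y + k) - 1 / (y + (k + 1)) := by
    simp_rw [hterm]
    simpa [Function.comp_def] using
      (EisensteinSeries.summable_linear_right_add_one_mul_linear_right y 1 1).comp_injective
        (Nat.cast_injective (R := ℤ))
  have hpartial (n : ℕ) : ∑ k ∈ Finset.range n, (1 / (y + k) - 1 / (y + (k + 1))) =
      1 / y - 1 / (y + n) := by
    simpa using Finset.sum_range_sub' (fun k : ℕ ↦ 1 / (y + k)) n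
  have htail : Tendsto (fun n : ℕ ↦ 1 / (y + n)) atTop (𝓝 0) := by
    simp_rw [one_div]
    exact tendsto_inv₀_cobounded.comp
      ((tendsto_const_add_cobounded y).comp (tendsto_natCast_atTop_cobounded (α := ℂ)))
  rw [hsummable.hasSum_iff_tendsto_nat]
  simpa only [hpartial, sub_zero] using htail.const_sub (1 / y)

lemma hasSum_pi_mul_cot_pi_mul {y : ℂ} (hy : y ∈ Complex.integerComplement) :
    HasSum (fun k : ℕ ↦ 1 / (y + k) + 1 / (y - (k + 1))) (π * Complex.cot (π * y)) := by
  have hcot : HasSum (cotTerm y) (π * Complex.cot (π * y) - 1 / y) :=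
    (summable_cotTerm hy).hasSum_iff_tendsto_nat.mpr (tendsto_logDeriv_euler_cot_sub hy)
  have htelescope := hasSum_one_div_add_sub_one_div_add_succ (y := y) fun k ↦ by
    simpa using Complex.integerComplement_add_ne_zero hy k
  rw [← sub_add_cancel (π * Complex.cot (π * y)) (1 / y)]
  refine (hcot.add htelescope).congr_fun fun k ↦ ?_
  rw [cotTerm]
  ring

lemma half_sub_div_pi_mem_integerComplement {x : ℂ} (hx : Complex.cos x ≠ 0) :
    1 / 2 - x / π ∈ Complex.integerComplement := by
  rintro ⟨n, hn⟩
  refine Complex.cos_ne_zero_iff.mp hx (-n) ?_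
  push_cast
  rw [hn]
  field_simp
  ring

theorem hasSum_tan {x : ℂ} (hx : Complex.cos x ≠ 0) :
    HasSum (fun k : ℕ ↦ 8 * x / ((2 * k + 1) ^ 2 * π ^ 2 - 4 * x ^ 2)) (Complex.tan x) := by
  have hpi : (π : ℂ) ≠ 0 := Complex.ofReal_ne_zero.mpr pi_ne_zero
  have hreflect : (π : ℂ) * (1 / 2 - x / π) = π / 2 - x := by field_simp
  have hcot : Complex.cot (π * (1 / 2 - x / π)) = Complex.tan x := by
    rw [hreflect, Complex.cot, Complex.cos_pi_div_two_sub, Complex.sin_pi_div_two_sub, Complex.tan]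
  have hsum := (hasSum_pi_mul_cot_pi_mul (half_sub_div_pi_mem_integerComplement hx)).div_const
    (π : ℂ)
  rw [hcot, mul_div_cancel_left₀ _ hpi] at hsum
  refine hsum.congr_fun fun k ↦ ?_
  have hpole (n : ℤ) : (2 * n + 1) * π - 2 * x ≠ 0 := fun h ↦
    Complex.cos_ne_zero_iff.mp hx n (by linear_combination -h / 2)
  have hpos : (2 * k + 1) * π - 2 * x ≠ 0 := by simpa using hpole k
  have hneg : (2 * k + 1) * π + 2 * x ≠ 0 := fun h ↦
    hpole (-(k + 1)) (by push_cast; linear_combination -h)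
  have hleft : 1 / 2 - x / π + k = ((2 * k + 1) * π - 2 * x) / (2 * π) := by
    field_simp
    ring
  have hright : 1 / 2 - x / π - (k + 1) = -((2 * k + 1) * π + 2 * x) / (2 * π) := by
    field_simp
    ring
  have hfactor : (2 * k + 1) ^ 2 * π ^ 2 - 4 * x ^ 2 =
      ((2 * k + 1) * π - 2 * x) * ((2 * k + 1) * π + 2 * x) := by ring
  have hnum : 8 * x = 2 * (((2 * k + 1) * π + 2 * x) - ((2 * k + 1) * π - 2 * x)) := by ring
  rw [hleft, hright, hfactor, hnum]
  generalize (2 * k + 1) * (π : ℂ) - 2 * x = p at hpos ⊢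
  generalize (2 * k + 1) * (π : ℂ) + 2 * x = q at hneg ⊢
  field_simp
  ring

theorem hasSum_tanh {z : ℂ} (hz : Complex.cosh z ≠ 0) :
    HasSum (fun k : ℕ ↦ 8 * z / (4 * z ^ 2 + (2 * k + 1) ^ 2 * π ^ 2)) (Complex.tanh z) := by
  rw [← hasSum_mul_right_iff Complex.I_ne_zero, ← Complex.tan_mul_I]
  rw [← Complex.cos_mul_I] at hz
  refine (hasSum_tan hz).congr_fun fun k ↦ ?_
  rw [mul_pow, Complex.I_sq]
  ring

lemma hasSum_tanh_div {s c : ℂ} (hc : c ≠ 0) (hs : Complex.cosh (s / (2 * c)) ≠ 0) :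
    HasSum (fun k : ℕ ↦ 4 * s * c / (s ^ 2 + (2 * k + 1) ^ 2 * π ^ 2 * c ^ 2))
      (Complex.tanh (s / (2 * c))) := by
  refine (hasSum_tanh hs).congr_fun fun k ↦ ?_
  have hden : 4 * (s / (2 * c)) ^ 2 + (2 * k + 1) ^ 2 * π ^ 2 =
      (s ^ 2 + (2 * k + 1) ^ 2 * π ^ 2 * c ^ 2) / c ^ 2 := by
    field_simp
    ring
  rw [hden]
  field_simp
  ring

lemma cosh_ne_zero_of_re_ne_zero {z : ℂ} (hz : z.re ≠ 0) : Complex.cosh z ≠ 0 := by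
  rw [← Complex.cos_mul_I, Complex.cos_ne_zero_iff]
  intro k hk
  have hreal : z * Complex.I = (((2 * k + 1) * π / 2 : ℝ) : ℂ) := by rw [hk]; push_cast; rfl
  refine hz ?_
  rw [← Complex.mul_I_im, hreal, Complex.ofReal_im]

end PartialFractions

section PrincipalBranch

variable {a b : ℂ}

lemma arg_add_arg_mem_Ioo_of_re_pos (ha : 0 < a.re) (hb : 0 < b.re) :
    a.arg + b.arg ∈ Set.Ioo (-π) π := by
  have ha' := abs_lt.mp (Complex.abs_arg_lt_pi_div_two_iff.mpr (Or.inl ha))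
  have hb' := abs_lt.mp (Complex.abs_arg_lt_pi_div_two_iff.mpr (Or.inl hb))
  constructor <;> linarith

lemma mul_mem_slitPlane_of_re_pos (ha : 0 < a.re) (hb : 0 < b.re) :
    a * b ∈ Complex.slitPlane := by
  have ha₀ := Complex.ne_zero_of_re_pos ha
  have hb₀ := Complex.ne_zero_of_re_pos hb
  have harg := arg_add_arg_mem_Ioo_of_re_pos ha hb
  rw [Complex.mem_slitPlane_iff_arg, Complex.arg_mul ha₀ hb₀ (Set.Ioo_subset_Ioc_self harg)]
  exact ⟨harg.2.ne, mul_ne_zero ha₀ hb₀⟩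

lemma log_mul_of_re_pos (ha : 0 < a.re) (hb : 0 < b.re) :
    Complex.log (a * b) = Complex.log a + Complex.log b :=
  Complex.log_mul (Complex.ne_zero_of_re_pos ha) (Complex.ne_zero_of_re_pos hb)
    (Set.Ioo_subset_Ioc_self (arg_add_arg_mem_Ioo_of_re_pos ha hb))

lemma log_div_of_re_pos (ha : 0 < a.re) (hb : 0 < b.re) :
    Complex.log (a / b) = Complex.log a - Complex.log b := by
  have hb_inv : 0 < b⁻¹.re := by
    rw [Complex.inv_re]
    exact div_pos hb (Complex.normSq_pos.mpr (Complex.ne_zero_of_re_pos hb))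
  have hb_arg : b.arg ≠ π := Complex.slitPlane_arg_ne_pi (Or.inl hb)
  rw [div_eq_mul_inv, log_mul_of_re_pos ha hb_inv, Complex.log_inv b hb_arg, sub_eq_add_neg]

lemma div_cpow_mul_mul_cpow_of_re_pos (ha : 0 < a.re) (hb : 0 < b.re) (r : ℂ) :
    (a / b) ^ r * (a * b) ^ r = a ^ (2 * r) := by
  have ha₀ := Complex.ne_zero_of_re_pos ha
  have hb₀ := Complex.ne_zero_of_re_pos hb
  rw [Complex.cpow_def_of_ne_zero (div_ne_zero ha₀ hb₀),
    Complex.cpow_def_of_ne_zero (mul_ne_zero ha₀ hb₀), Complex.cpow_def_of_ne_zero ha₀,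
    log_div_of_re_pos ha hb, log_mul_of_re_pos ha hb, ← Complex.exp_add]
  ring_nf

lemma re_cpow_inv_two_pos {w : ℂ} (hw : w ∈ Complex.slitPlane) : 0 < (w ^ (2⁻¹ : ℂ)).re := by
  have hre : -w.re < ‖w‖ := by
    rcases hw with hre_pos | him
    · linarith [norm_nonneg w]
    · exact (neg_le_abs w.re).trans_lt (Complex.abs_re_lt_norm.mpr him)
  rw [Complex.cpow_inv_two_re]
  exact Real.sqrt_pos.mpr (by linarith)

lemma sq_mul_div_cpow_mul_mul_cpow {r : ℝ} (hr : 0 < r) (ha : 0 < a.re) (hb : 0 < b.re) :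
    (r ^ 2 * a / b) ^ (2⁻¹ : ℂ) * (a * b) ^ (2⁻¹ : ℂ) = r * a := by
  have hr₀ : (r : ℂ) ≠ 0 := Complex.ofReal_ne_zero.mpr hr.ne'
  have hb₀ := Complex.ne_zero_of_re_pos hb
  have hra : 0 < (r * a).re := by
    rw [Complex.re_ofReal_mul]
    positivity
  have hbr : 0 < (b / r).re := by
    rw [Complex.div_ofReal_re]
    positivity
  have hquot : r ^ 2 * a / b = r * a / (b / r) := by field_simp
  have hprod : a * b = r * a * (b / r) := by field_simp
  rw [hquot, hprod, div_cpow_mul_mul_cpow_of_re_pos hra hbr, mul_inv_cancel₀ two_ne_zero,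
    Complex.cpow_one]

theorem hasSum_cpow_mul_tanh {r c : ℝ} (hr : 0 < r) (hc : 0 < c) (ha : 0 < a.re) (hb : 0 < b.re) :
    HasSum (fun k : ℕ ↦ 4 * r * c * (a / (a * b + (2 * k + 1) ^ 2 * π ^ 2 * c ^ 2)))
      ((r ^ 2 * a / b) ^ (2⁻¹ : ℂ) * Complex.tanh ((a * b) ^ (2⁻¹ : ℂ) / (2 * c))) := by
  have hprefactor := sq_mul_div_cpow_mul_mul_cpow hr ha hb
  have hs_sq : ((a * b) ^ (2⁻¹ : ℂ)) ^ 2 = a * b := Complex.cpow_ofNat_inv_pow _ 2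
  have hs_re := re_cpow_inv_two_pos (mul_mem_slitPlane_of_re_pos ha hb)
  set s : ℂ := (a * b) ^ (2⁻¹ : ℂ)
  have hcosh : Complex.cosh (s / (2 * c)) ≠ 0 := by
    refine cosh_ne_zero_of_re_ne_zero (ne_of_gt ?_)
    rw [← Complex.ofReal_ofNat, ← Complex.ofReal_mul, Complex.div_ofReal_re]
    positivity
  refine ((hasSum_tanh_div (Complex.ofReal_ne_zero.mpr hc.ne') hcosh).mul_left _).congr_fun
    fun k ↦ ?_
  rw [hs_sq, mul_div_assoc', mul_div_assoc']
  congr 1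
  linear_combination -4 * c * hprefactor

end PrincipalBranch

lemma sq_two_mul_div_sqrt_mul {h₀ g : ℝ} (hh₀ : 0 < h₀) (hg : 0 < g) :
    (2 * h₀ / √(h₀ * g)) ^ 2 = 4 * h₀ / g := by
  rw [div_pow, Real.sq_sqrt (mul_pos hh₀ hg).le]
  field_simp
  norm_num

theorem stmt3_general (h₀ g : ℝ) (μ : ℂ) (hh₀ : 0 < h₀) (hg : 0 < g)
    (l : ℂ) (hl : 0 < l.re) (hlμ : 0 < (l + 2 * μ).re) :
    Summable (fun k : ℕ ↦
      l / (l ^ 2 + 2 * μ * l + (((2 * (k:ℝ) + 1) ^ 2 * π ^ 2 * h₀ * g : ℝ) : ℂ))) ∧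
    -((4 * (h₀:ℂ) * l / ((g:ℂ) * (l + 2 * μ))) ^ ((1:ℂ)/2))
        * Complex.tanh ((l * (l + 2 * μ)) ^ ((1:ℂ)/2)
            / (2 * ((Real.sqrt (h₀ * g) : ℝ) : ℂ)))
      = -8 * (h₀:ℂ) * ∑' k : ℕ,
          l / (l ^ 2 + 2 * μ * l + (((2 * (k:ℝ) + 1) ^ 2 * π ^ 2 * h₀ * g : ℝ) : ℂ)) := by
  have hc : 0 < √(h₀ * g) := Real.sqrt_pos.mpr (mul_pos hh₀ hg)
  have hc_sq : √(h₀ * g) ^ 2 = h₀ * g := Real.sq_sqrt (mul_pos hh₀ hg).le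
  set c : ℝ := √(h₀ * g)
  have hrc : (4 * (2 * h₀ / c : ℝ) * c : ℂ) = 8 * h₀ := by
    norm_cast
    field_simp
    norm_num
  have hquot : 4 * (h₀ : ℂ) * l / (g * (l + 2 * μ)) =
      ((2 * h₀ / c : ℝ) : ℂ) ^ 2 * l / (l + 2 * μ) := by
    rw [← Complex.ofReal_pow, sq_two_mul_div_sqrt_mul hh₀ hg]
    push_cast
    rw [div_mul_eq_mul_div, div_div]
  have hden (k : ℕ) : l ^ 2 + 2 * μ * l + (((2 * (k:ℝ) + 1) ^ 2 * π ^ 2 * h₀ * g : ℝ) : ℂ) =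
      l * (l + 2 * μ) + (2 * k + 1) ^ 2 * π ^ 2 * c ^ 2 := by
    rw [mul_assoc _ h₀ g, ← hc_sq]
    push_cast
    ring
  have hsum := hasSum_cpow_mul_tanh (r := 2 * h₀ / c) (by positivity) hc hl hlμ
  rw [hrc] at hsum
  simp_rw [hden, hquot, one_div]
  have h8 : (8 * h₀ : ℂ) ≠ 0 := by simp [hh₀.ne']
  refine ⟨(summable_mul_left_iff h8).mp hsum.summable, ?_⟩
  rw [neg_mul, ← hsum.tsum_eq, tsum_mul_left]
  ring

/-- Series representation of the transfer function of the linearized moving water tank: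
`𝐇(λ) = −√(4h₀λ/(g(λ+2μ)))·tanh(√(λ(λ+2μ))/(2√(h₀g))) = −8h₀ ∑_{k≥0} λ/(λ²+2μλ+(2k+1)²π²h₀g)`. -/
theorem stmt3 (h₀ g μ : ℝ) (hh₀ : 0 < h₀) (hg : 0 < g) (hμ : 0 < μ)
    (l : ℂ) (hl : 0 < l.re) :
    Summable (fun k : ℕ ↦
      l / (l ^ 2 + 2 * (μ:ℂ) * l + (((2 * (k:ℝ) + 1) ^ 2 * π ^ 2 * h₀ * g : ℝ) : ℂ))) ∧
    -((4 * (h₀:ℂ) * l / ((g:ℂ) * (l + 2 * (μ:ℂ)))) ^ ((1:ℂ)/2))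
        * Complex.tanh ((l * (l + 2 * (μ:ℂ))) ^ ((1:ℂ)/2)
            / (2 * ((Real.sqrt (h₀ * g) : ℝ) : ℂ)))
      = -8 * (h₀:ℂ) * ∑' k : ℕ,
          l / (l ^ 2 + 2 * (μ:ℂ) * l + (((2 * (k:ℝ) + 1) ^ 2 * π ^ 2 * h₀ * g : ℝ) : ℂ)) := by
  exact stmt3_general h₀ g μ hh₀ hg l hl (by simpa using add_pos hl (by positivity))
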